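/- Let ≤ be an embedding order on A*. For any W ∈ A*, the generating-function identity I_W(x) = I*_W(x)/(1 − A(x)) holds as formal power series. In particular, for W, V ∈ A*, I_W(x) = I_V(x) if and only if I*_W(x) = I*_V(x). -/

import Mathlib

/-- An embedding order on words over a weighted alphabet. -/
structure EmbeddingOrder (A : Type*) (w : A → ℕ) where
  le : List A → List A → Prop
  le_refl : ∀ W, le W W
  le_trans : ∀ {U V W}, le U V → le V W → le U W
  le_antisymm : ∀ {V W}, le V W → le W V → V = W
  nil_le : ∀ W, le [] W
  weight_lt : ∀ {W V}, le W V → W ≠ V → (W.map w).sum < (V.map w).sum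
  le_iff_factor : ∀ W V, le W V ↔ ∃ Ws : List (List A),
    Ws.length = V.length ∧ Ws.flatten = W ∧ ∀ q ∈ Ws.zip V, le q.1 [q.2]

/-- The weight of a word: the sum of the weights of its letters. -/
def wt {A : Type*} (w : A → ℕ) (W : List A) : ℕ := (W.map w).sum

/-- `V` is a *minimal container* of `W` (written `W ≤* V`): `W ≤ V` but `W ≰ P` for
every proper prefix `P` of `V`. -/
def MinContainer {A : Type*} {w : A → ℕ} (E : EmbeddingOrder A w) (W V : List A) : Prop :=
  E.le W V ∧ ∀ P : List A, P <+: V → P ≠ V → ¬ E.le W P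

/-- The generating function `A(x) = Σ_{a ∈ A} x^{weight a}` of the alphabet,
as a formal power series (with integer coefficients). -/
noncomputable def Aser (A : Type*) (w : A → ℕ) : PowerSeries ℤ :=
  PowerSeries.mk fun n => (Set.ncard {a : A | w a = n} : ℤ)

/-- `I_W(x) = Σ_{V : W ≤ V} x^{weight V}` as a formal power series. -/
noncomputable def Iser {A : Type*} (w : A → ℕ) (E : EmbeddingOrder A w) (W : List A) :
    PowerSeries ℤ :=
  PowerSeries.mk fun n => (Set.ncard {V : List A | E.le W V ∧ wt w V = n} : ℤ)

/-- `I*_W(x) = Σ_{V : W ≤* V} x^{weight V}` as a formal power series. -/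
noncomputable def IserStar {A : Type*} (w : A → ℕ) (E : EmbeddingOrder A w) (W : List A) :
    PowerSeries ℤ :=
  PowerSeries.mk fun n => (Set.ncard {V : List A | MinContainer E W V ∧ wt w V = n} : ℤ)

/-!
Every proper prefix of `V ++ [a]` is a prefix of `V`, and the containers of `W` are closed under
appending letters. So a container of `W` is either minimal, or uniquely `V ++ [a]` with `V` a
container of `W` and `a` an arbitrary letter. Since weights add, counting by weight turns this
into `I_W = I*_W + I_W * A`.
-/

/-- The generating function `∑_{x ∈ S} X ^ f x` of a set `S` of objects weighted by `f`. A weight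
attained infinitely often on `S` contributes the junk coefficient `0`. -/
noncomputable def weightSeries (R : Type*) [Semiring R] {α : Type*} (f : α → ℕ) (S : Set α) :
    PowerSeries R :=
  PowerSeries.mk fun n => ({x ∈ S | f x = n}.ncard : R)

section WeightSeries

open Finset.HasAntidiagonal (antidiagonal mem_antidiagonal)

variable (R : Type*) [Semiring R] {α β : Type*}

theorem weightSeries_union {f : α → ℕ} {S T : Set α} (hS : ∀ n, {x ∈ S | f x = n}.Finite)
    (hT : ∀ n, {x ∈ T | f x = n}.Finite) (hST : Disjoint S T) :
    weightSeries R f (S ∪ T) = weightSeries R f S + weightSeries R f T := by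
  ext n
  have hfiber : {x ∈ S ∪ T | f x = n} = {x ∈ S | f x = n} ∪ {x ∈ T | f x = n} :=
    Set.union_inter_distrib_right S T {x | f x = n}
  have hdisj : Disjoint {x ∈ S | f x = n} {x ∈ T | f x = n} :=
    hST.mono (Set.sep_subset _ _) (Set.sep_subset _ _)
  simp only [weightSeries, map_add, PowerSeries.coeff_mk, hfiber,
    Set.ncard_union_eq hdisj (hS n) (hT n), Nat.cast_add]

theorem weightSeries_image {g : β → α} {S : Set β} (hg : S.InjOn g) (f : α → ℕ) :
    weightSeries R f (g '' S) = weightSeries R (f ∘ g) S := by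
  ext n
  have hfiber : {y ∈ g '' S | f y = n} = g '' {x ∈ S | (f ∘ g) x = n} :=
    (Set.image_inter_preimage g S {y | f y = n}).symm
  simp only [weightSeries, PowerSeries.coeff_mk, hfiber,
    (hg.mono (Set.sep_subset _ _)).ncard_image]

theorem weightSeries_prod {f : α → ℕ} {g : β → ℕ} {S : Set α} {T : Set β}
    (hS : ∀ n, {x ∈ S | f x = n}.Finite) (hT : ∀ n, {y ∈ T | g y = n}.Finite) :
    weightSeries R (fun p : α × β => f p.1 + g p.2) (S ×ˢ T) =
      weightSeries R f S * weightSeries R g T := by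
  ext n
  let block (k : ℕ × ℕ) : Set (α × β) := {x ∈ S | f x = k.1} ×ˢ {y ∈ T | g y = k.2}
  have hfiber : {p ∈ S ×ˢ T | f p.1 + g p.2 = n} =
      ⋃ k ∈ (antidiagonal n : Set (ℕ × ℕ)), block k := by
    ext p
    simp only [block, Set.mem_iUnion, Set.mem_prod, Set.mem_ofPred_eq, Finset.mem_coe,
      mem_antidiagonal]
    exact ⟨fun ⟨⟨hx, hy⟩, hn⟩ => ⟨(f p.1, g p.2), hn, ⟨hx, rfl⟩, ⟨hy, rfl⟩⟩,
      fun ⟨k, hk, ⟨hx, hf⟩, ⟨hy, hg⟩⟩ => ⟨⟨hx, hy⟩, by rw [hf, hg, hk]⟩⟩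
  have hdisj : (antidiagonal n : Set (ℕ × ℕ)).PairwiseDisjoint block :=
    fun k _ l _ hkl => Set.disjoint_left.2 fun p hk hl =>
      hkl (Prod.ext (hk.1.2.symm.trans hl.1.2) (hk.2.2.symm.trans hl.2.2))
  have hcard : {p ∈ S ×ˢ T | f p.1 + g p.2 = n}.ncard =
      ∑ k ∈ antidiagonal n, {x ∈ S | f x = k.1}.ncard * {y ∈ T | g y = k.2}.ncard := by
    rw [hfiber, (Finset.finite_toSet _).ncard_biUnion (fun k _ => (hS k.1).prod (hT k.2)) hdisj,
      finsum_mem_coe_finset]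
    simp only [block, Set.ncard_prod]
  simp only [weightSeries, PowerSeries.coeff_mk, PowerSeries.coeff_mul, hcard, Nat.cast_sum,
    Nat.cast_mul]

end WeightSeries

section Words

variable {A : Type*} {w : A → ℕ}

theorem wt_append (w : A → ℕ) (U V : List A) : wt w (U ++ V) = wt w U + wt w V := by
  simp only [wt, List.map_append, List.sum_append]

theorem wt_singleton (w : A → ℕ) (a : A) : wt w [a] = w a := by
  simp only [wt, List.map_singleton, List.sum_singleton]

theorem length_le_wt (hw : ∀ a, 0 < w a) (V : List A) : V.length ≤ wt w V := by
  simpa only [wt, List.length_map] using List.length_le_sum_of_one_le (V.map w) (by grind)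

theorem weight_le_wt {V : List A} {a : A} (ha : a ∈ V) : w a ≤ wt w V :=
  List.le_sum_of_mem (List.mem_map_of_mem ha)

theorem finite_wt_eq (hw : ∀ a, 0 < w a) (hfin : ∀ n, {a : A | w a = n}.Finite) (n : ℕ) :
    {V : List A | wt w V = n}.Finite := by
  have hletters : {a : A | w a ≤ n}.Finite :=
    ((Set.finite_Iic n).biUnion fun k _ => hfin k).subset fun a ha =>
      Set.mem_biUnion (show w a ∈ Set.Iic n from ha) rfl
  have := hletters.to_subtype
  refine ((List.finite_length_le {a : A | w a ≤ n} n).image (List.map (↑))).subset ?_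
  intro V hV
  obtain ⟨l, rfl⟩ : V ∈ Set.range (List.map ((↑) : {a : A | w a ≤ n} → A)) := by
    rw [Set.range_list_map_coe]
    exact fun a ha => (weight_le_wt ha).trans_eq hV
  exact ⟨l, (List.length_map _).symm.trans_le ((length_le_wt hw _).trans_eq hV), rfl⟩

/-- The words of `S` none of whose proper prefixes lie in `S`. For the set `S` of words containing
`W`, these are the minimal containers of `W`. -/
def prefixMinimal (S : Set (List A)) : Set (List A) :=
  {V ∈ S | ∀ P, P <+: V → P ≠ V → P ∉ S}

theorem disjoint_prefixMinimal_image_append (S : Set (List A)) :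
    Disjoint (prefixMinimal S) ((fun p : List A × A => p.1 ++ [p.2]) '' (S ×ˢ Set.univ)) := by
  rw [Set.disjoint_left]
  rintro _ ⟨-, hmin⟩ ⟨⟨V, a⟩, ⟨hV, -⟩, rfl⟩
  exact hmin V (List.prefix_append V [a]) (by simp) hV

theorem prefixMinimal_union_image_append {S : Set (List A)}
    (hS : ∀ ⦃U V⦄, U <+: V → U ∈ S → V ∈ S) :
    prefixMinimal S ∪ (fun p : List A × A => p.1 ++ [p.2]) '' (S ×ˢ Set.univ) = S := by
  refine Set.Subset.antisymm (Set.union_subset (Set.sep_subset _ _) ?_) fun V hV => ?_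
  · rintro _ ⟨⟨V, a⟩, ⟨hV, -⟩, rfl⟩
    exact hS (List.prefix_append V [a]) hV
  · refine or_iff_not_imp_left.2 fun hmin => ?_
    obtain ⟨P, hPV, hne, hP⟩ : ∃ P, P <+: V ∧ P ≠ V ∧ P ∈ S := by
      simpa [prefixMinimal, hV] using hmin
    rcases List.eq_nil_or_concat' V with rfl | ⟨U, a, rfl⟩
    · exact absurd (List.prefix_nil.1 hPV) hne
    · have hPU : P <+: U := (List.prefix_concat_iff.1 hPV).resolve_left hne
      exact ⟨(U, a), ⟨hS hPU hP, Set.mem_univ a⟩, rfl⟩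

theorem weightSeries_eq_prefixMinimal_add (R : Type*) [Semiring R] (hw : ∀ a, 0 < w a)
    (hfin : ∀ n, {a : A | w a = n}.Finite) {S : Set (List A)}
    (hS : ∀ ⦃U V⦄, U <+: V → U ∈ S → V ∈ S) :
    weightSeries R (wt w) S =
      weightSeries R (wt w) (prefixMinimal S) +
        weightSeries R (wt w) S * weightSeries R w Set.univ := by
  have hwords (T : Set (List A)) (n : ℕ) : {V ∈ T | wt w V = n}.Finite :=
    (finite_wt_eq hw hfin n).subset fun _ hV => hV.2
  have hletters (n : ℕ) : {a ∈ Set.univ | w a = n}.Finite := (hfin n).subset fun _ ha => ha.2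
  let snoc (p : List A × A) : List A := p.1 ++ [p.2]
  have hinj : snoc.Injective := fun p q hpq =>
    Prod.ext (List.append_inj_left' hpq rfl) (by simpa using List.append_inj_right' hpq rfl)
  have hwt : wt w ∘ snoc = fun p => wt w p.1 + w p.2 := by
    funext p
    simp only [snoc, Function.comp_apply, wt_append, wt_singleton]
  calc weightSeries R (wt w) S
      = weightSeries R (wt w) (prefixMinimal S ∪ snoc '' (S ×ˢ Set.univ)) := by
        rw [prefixMinimal_union_image_append hS]
    _ = weightSeries R (wt w) (prefixMinimal S) + weightSeries R (wt w) (snoc '' (S ×ˢ Set.univ)) :=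
        weightSeries_union R (hwords _) (hwords _) (disjoint_prefixMinimal_image_append S)
    _ = weightSeries R (wt w) (prefixMinimal S) +
          weightSeries R (wt w) S * weightSeries R w Set.univ := by
        rw [weightSeries_image R hinj.injOn, hwt, weightSeries_prod R (hwords S) hletters]

theorem EmbeddingOrder.le_of_prefix (E : EmbeddingOrder A w) {W U V : List A} (hUV : U <+: V)
    (h : E.le W U) : E.le W V := by
  obtain ⟨T, rfl⟩ := hUV
  obtain ⟨Ws, hlen, hflat, hle⟩ := (E.le_iff_factor W U).1 h
  refine (E.le_iff_factor W (U ++ T)).2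
    ⟨Ws ++ List.replicate T.length [], by simp [hlen], by simp [hflat], fun q hq => ?_⟩
  rw [List.zip_append hlen, List.mem_append] at hq
  rcases hq with hq | hq
  · exact hle q hq
  · have hnil : q.1 = [] := List.eq_of_mem_replicate (List.of_mem_zip hq).1
    exact hnil ▸ E.nil_le [q.2]

theorem Aser_eq_weightSeries (w : A → ℕ) : Aser A w = weightSeries ℤ w Set.univ := by
  simp only [Aser, weightSeries, Set.mem_univ, true_and]

theorem Iser_mul_one_sub_Aser (hw : ∀ a, 0 < w a) (hfin : ∀ n, {a : A | w a = n}.Finite)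
    (E : EmbeddingOrder A w) (W : List A) :
    Iser w E W * (1 - Aser A w) = IserStar w E W := by
  have hrec : Iser w E W = IserStar w E W + Iser w E W * Aser A w := by
    rw [Aser_eq_weightSeries]
    exact weightSeries_eq_prefixMinimal_add ℤ hw hfin (S := {V | E.le W V})
      fun _ _ hUV hU => E.le_of_prefix hUV hU
  linear_combination hrec

theorem isUnit_one_sub_Aser (hw : ∀ a, 0 < w a) : IsUnit (1 - Aser A w) := by
  have hconst : PowerSeries.constantCoeff (Aser A w) = 0 := by
    simp [Aser, ← PowerSeries.coeff_zero_eq_constantCoeff_apply, (hw _).ne']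
  rw [PowerSeries.isUnit_iff_constantCoeff, map_sub, map_one, hconst, sub_zero]
  exact isUnit_one

end Words

/-- **Observation `obs-IW-vs-IWstar`.**  For an embedding order on words over a weighted
alphabet (positive weights, finitely many letters of each weight), for every word `W` one
has `I_W(x) = I*_W(x)/(1 − A(x))` as formal power series (stated multiplicatively:
`I_W(x)·(1 − A(x)) = I*_W(x)`); in particular, for all `W, V`,
`I_W(x) = I_V(x)` if and only if `I*_W(x) = I*_V(x)`. -/
theorem Iser_eq_IserStar_div_one_sub_Aser {A : Type*} (w : A → ℕ)
    (hw : ∀ a, 0 < w a) (hfin : ∀ n, {a : A | w a = n}.Finite)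
    (E : EmbeddingOrder A w) (W : List A) :
    Iser w E W * (1 - Aser A w) = IserStar w E W ∧
      ∀ V : List A, (Iser w E W = Iser w E V ↔ IserStar w E W = IserStar w E V) := by
  refine ⟨Iser_mul_one_sub_Aser hw hfin E W, fun V => ?_⟩
  rw [← Iser_mul_one_sub_Aser hw hfin E W, ← Iser_mul_one_sub_Aser hw hfin E V,
    (isUnit_one_sub_Aser hw).mul_left_inj]
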